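/- Safe screening rule for cardinality-constrained logistic regression (Proposition 2). Suppose (x*, t*, z*) is an optimal solution attaining η_CC, let α and δ be defined from x*, and let η̄_C be any real number with η_C ≤ η̄_C. Then every optimal solution (x̂, ẑ) of the cardinality-constrained mixed-integer problem attaining η_C satisfies: ẑ_j = 0 for every index j with δ_j ≤ δ_{[k+1]} and η_CC − γ(δ_j − δ_{[k]}) > η̄_C, and ẑ_j = 1 for every index j with δ_j ≥ δ_{[k]} and η_CC + γ(δ_j − δ_{[k+1]}) > η̄_C. -/

import Mathlib

/-- The logistic loss `L(x) = (1/m) ∑ᵢ log (1 + exp (-yᵢ (A x)ᵢ))`. -/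
noncomputable def logLoss (m n : ℕ) (A : Fin m → Fin n → ℝ) (y : Fin m → ℝ)
    (x : Fin n → ℝ) : ℝ :=
  (1 / (m : ℝ)) * ∑ i, Real.log (1 + Real.exp (-(y i) * ∑ j, A i j * x j))

/-!
Linearise the loss at a relaxed optimum `x*`. The optimum also minimises the linearised objective,
whose minimum over `(x, t)` for fixed `z` is `-γ ∑ j, z j * δ j` with `δ j = (∂ⱼ L(x*))² / 4`. By
convexity of the loss, a feasible point with selector `z` therefore costs at least
`ηCC + γ (∑ j, w j * δ j - ∑ j, z j * δ j)` for every admissible `w`. Take `w` to be the indicator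
of the `k` largest scores and `c` a value separating those scores from the others: a 0-1 selector
that differs from `w` at `j` costs at least `ηCC + γ |δ j - c|`, so a cheaper point agrees with `w`
at `j`.
-/

open Finset

section Convexity

variable {E : Type*} [NormedAddCommGroup E] [NormedSpace ℝ E]

lemma add_fderiv_sub_le_of_convexOn {f : E → ℝ} {f' : E →L[ℝ] ℝ} {x : E}
    (hf : ConvexOn ℝ Set.univ f) (hf' : HasFDerivAt f f' x) (y : E) :
    f x + f' (y - x) ≤ f y := by
  have hline : ConvexOn ℝ Set.univ (f ∘ AffineMap.lineMap (k := ℝ) x y) :=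
    hf.comp_affineMap (AffineMap.lineMap x y)
  have hderiv : HasDerivAt (f ∘ AffineMap.lineMap (k := ℝ) x y) (f' (y - x)) 0 := by
    refine HasFDerivAt.comp_hasDerivAt 0 ?_ AffineMap.hasDerivAt_lineMap
    rwa [AffineMap.lineMap_apply_zero]
  have hslope := hline.le_slope_of_hasDerivAt trivial trivial zero_lt_one hderiv
  simp only [slope_def_field, Function.comp_apply, AffineMap.lineMap_apply_zero,
    AffineMap.lineMap_apply_one, sub_zero, div_one] at hslope
  linarith

lemma fderiv_sub_nonneg_of_isMinOn {f : E → ℝ} {f' : E →L[ℝ] ℝ} {s : Set E} {x y : E}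
    (hs : Convex ℝ s) (hmin : IsMinOn f s x) (hf' : HasFDerivAt f f' x) (hx : x ∈ s)
    (hy : y ∈ s) : 0 ≤ f' (y - x) :=
  hmin.localize.hasFDerivWithinAt_nonneg hf'.hasFDerivWithinAt
    (sub_mem_posTangentConeAt_of_segment_subset (hs.segment_subset hx hy))

lemma convexOn_sum {κ F : Type*} [AddCommGroup F] [Module ℝ F] {s : Set F}
    (hs : Convex ℝ s) (I : Finset κ) {f : κ → F → ℝ}
    (hf : ∀ i ∈ I, ConvexOn ℝ s (f i)) : ConvexOn ℝ s (∑ i ∈ I, f i) :=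
  Finset.sum_induction f (ConvexOn ℝ s) (fun _ _ => ConvexOn.add) (convexOn_const 0 hs) hf

end Convexity

section RotatedCone

lemma two_mul_mul_le_of_sq_le_mul {x₁ t₁ z₁ x₂ t₂ z₂ : ℝ} (ht₁ : 0 ≤ t₁) (hz₁ : 0 ≤ z₁)
    (ht₂ : 0 ≤ t₂) (hz₂ : 0 ≤ z₂) (h₁ : x₁ ^ 2 ≤ z₁ * t₁) (h₂ : x₂ ^ 2 ≤ z₂ * t₂) :
    2 * (x₁ * x₂) ≤ z₁ * t₂ + z₂ * t₁ := by
  have hprod : (x₁ * x₂) ^ 2 ≤ (z₁ * t₁) * (z₂ * t₂) := by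
    rw [mul_pow]
    gcongr
  refine le_of_sq_le_sq ?_ (by positivity)
  nlinarith [sq_nonneg (z₁ * t₂ - z₂ * t₁)]

lemma convex_rotatedCone :
    Convex ℝ {p : ℝ × ℝ × ℝ | 0 ≤ p.2.1 ∧ 0 ≤ p.2.2 ∧ p.1 ^ 2 ≤ p.2.2 * p.2.1} := by
  rintro ⟨x₁, t₁, z₁⟩ ⟨ht₁, hz₁, h₁⟩ ⟨x₂, t₂, z₂⟩ ⟨ht₂, hz₂, h₂⟩ a b ha hb -
  dsimp only at *
  have hcross := two_mul_mul_le_of_sq_le_mul ht₁ hz₁ ht₂ hz₂ h₁ h₂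
  refine ⟨add_nonneg (mul_nonneg ha ht₁) (mul_nonneg hb ht₂),
    add_nonneg (mul_nonneg ha hz₁) (mul_nonneg hb hz₂), ?_⟩
  calc (a * x₁ + b * x₂) ^ 2
      = a ^ 2 * x₁ ^ 2 + b ^ 2 * x₂ ^ 2 + a * b * (2 * (x₁ * x₂)) := by ring
    _ ≤ a ^ 2 * (z₁ * t₁) + b ^ 2 * (z₂ * t₂) + a * b * (z₁ * t₂ + z₂ * t₁) := by gcongr
    _ = (a * z₁ + b * z₂) * (a * t₁ + b * t₂) := by ring

end RotatedCone

section Threshold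

variable {ι : Type*}

/-- The value `c` separates the entries of `δ` indexed by `S`, which lie above it, from the
remaining ones, which lie below it. When `S` has `k` elements, `δ_[k]` and `δ_[k+1]` are the
extreme choices of `c`. -/
structure IsThreshold (δ : ι → ℝ) (S : Finset ι) (c : ℝ) : Prop where
  le_of_mem : ∀ i ∈ S, c ≤ δ i
  le_of_notMem : ∀ i ∉ S, δ i ≤ c

lemma exists_card_eq_and_isThreshold {n k : ℕ} (hkn : k ≤ n) {δ : Fin n → ℝ}
    {σ : Equiv.Perm (Fin n)} (hσ : Antitone (δ ∘ σ)) :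
    ∃ S : Finset (Fin n), #S = k ∧
      ∀ i : Fin n, k ≤ i + 1 → (i : ℕ) ≤ k → IsThreshold δ S (δ (σ i)) := by
  refine ⟨(univ.filter fun i : Fin n => (i : ℕ) < k).map σ.toEmbedding, ?_, fun i hki hik => ?_⟩
  · rw [card_map, Fin.card_filter_val_lt, min_eq_right hkn]
  · constructor <;> intro l hl <;> obtain ⟨p, rfl⟩ := σ.surjective l
    · have hpk : (p : ℕ) < k := by simpa using hl
      exact hσ (show p ≤ i by rw [Fin.le_def]; omega)
    · have hkp : k ≤ (p : ℕ) := by simpa using hl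
      exact hσ (show i ≤ p from hik.trans hkp)

namespace IsThreshold

variable {δ z : ι → ℝ} {S : Finset ι} {c : ℝ}

lemma sub_indicator_mul_nonpos [DecidableEq ι] (h : IsThreshold δ S c) {i : ι}
    (hz : 0 ≤ z i ∧ z i ≤ 1) :
    (z i - if i ∈ S then 1 else 0) * (δ i - c) ≤ 0 := by
  split_ifs with hi
  · exact mul_nonpos_of_nonpos_of_nonneg (by linarith) (sub_nonneg.2 (h.le_of_mem i hi))
  · exact mul_nonpos_of_nonneg_of_nonpos (by linarith) (sub_nonpos.2 (h.le_of_notMem i hi))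

variable [Fintype ι]

lemma sum_mul_le_sum_add_sub_indicator_mul [DecidableEq ι] (h : IsThreshold δ S c)
    (hc : 0 ≤ c) (hz : ∀ i, 0 ≤ z i ∧ z i ≤ 1) (hsum : ∑ i, z i ≤ #S) (j : ι) :
    ∑ i, z i * δ i ≤ ∑ i ∈ S, δ i + (z j - if j ∈ S then 1 else 0) * (δ j - c) := by
  set w : ι → ℝ := fun i => if i ∈ S then 1 else 0
  have hw : ∑ i, w i = #S := by simp [w]
  have hwδ : ∑ i, w i * δ i = ∑ i ∈ S, δ i := by simp [w]
  have hdrop : ∑ i, (z i - w i) * (δ i - c) ≤ (z j - w j) * (δ j - c) := by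
    rw [← add_sum_erase _ _ (mem_univ j)]
    exact add_le_of_nonpos_right (sum_nonpos fun i _ => h.sub_indicator_mul_nonpos (hz i))
  have hexpand : ∑ i, (z i - w i) * (δ i - c)
      = ∑ i, z i * δ i - ∑ i, w i * δ i - c * (∑ i, z i - ∑ i, w i) := by
    simp only [mul_sub, sub_mul, sum_sub_distrib, ← sum_mul]
    ring
  have hbudget : c * (∑ i, z i - ∑ i, w i) ≤ 0 :=
    mul_nonpos_of_nonneg_of_nonpos hc (by linarith)
  linarith

lemma sum_mul_le_sum_add_mul (h : IsThreshold δ S c) (hc : 0 ≤ c)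
    (hz : ∀ i, 0 ≤ z i ∧ z i ≤ 1) (hsum : ∑ i, z i ≤ #S) (j : ι) :
    ∑ i, z i * δ i ≤ ∑ i ∈ S, δ i + z j * (δ j - c) := by
  classical
  have hzero := h.sub_indicator_mul_nonpos (z := 0) (i := j) (by simp)
  simp only [Pi.zero_apply] at hzero
  linarith [h.sum_mul_le_sum_add_sub_indicator_mul hc hz hsum j]

lemma sum_mul_le_sum_sub_mul (h : IsThreshold δ S c) (hc : 0 ≤ c)
    (hz : ∀ i, 0 ≤ z i ∧ z i ≤ 1) (hsum : ∑ i, z i ≤ #S) (j : ι) :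
    ∑ i, z i * δ i ≤ ∑ i ∈ S, δ i - (1 - z j) * (δ j - c) := by
  classical
  have hone := h.sub_indicator_mul_nonpos (z := 1) (i := j) (by simp)
  simp only [Pi.one_apply] at hone
  linarith [h.sum_mul_le_sum_add_sub_indicator_mul hc hz hsum j]

end IsThreshold

end Threshold

section LogisticLoss

/-- The scalar logistic loss, as a function of the margin `u = yᵢ (A x)ᵢ`. -/
noncomputable def logisticLoss (u : ℝ) : ℝ :=
  Real.log (1 + Real.exp (-u))

lemma hasDerivAt_logisticLoss (u : ℝ) :
    HasDerivAt logisticLoss (-Real.sigmoid (-u)) u := by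
  have hlog := ((hasDerivAt_neg u).exp.const_add 1).log (by positivity)
  refine hlog.congr_deriv ?_
  rw [← Real.sigmoid_mul_rexp_neg, Real.sigmoid_def]
  ring

lemma convexOn_logisticLoss : ConvexOn ℝ Set.univ logisticLoss := by
  refine Monotone.convexOn_univ_of_deriv
    (fun u => (hasDerivAt_logisticLoss u).differentiableAt) ?_
  rw [deriv_eq hasDerivAt_logisticLoss]
  exact fun u v huv => neg_le_neg (Real.sigmoid_monotone (neg_le_neg huv))

/-- The linear form `x ↦ ∑ j, a j * x j`. -/
noncomputable def dotForm {ι : Type*} [Fintype ι] (a : ι → ℝ) : (ι → ℝ) →L[ℝ] ℝ :=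
  ∑ j, a j • .proj j

lemma dotForm_apply {ι : Type*} [Fintype ι] (a x : ι → ℝ) : dotForm a x = ∑ j, a j * x j := by
  simp [dotForm]

/-- The dual vector `α` of the paper at the point `x`. -/
noncomputable def logisticDual (m n : ℕ) (A : Fin m → Fin n → ℝ) (y : Fin m → ℝ)
    (x : Fin n → ℝ) (i : Fin m) : ℝ :=
  y i / (m * (1 + Real.exp (y i * ∑ j, A i j * x j)))

variable (m n : ℕ) (A : Fin m → Fin n → ℝ) (y : Fin m → ℝ)

lemma logLoss_eq :
    logLoss m n A y = (1 / (m : ℝ)) • ∑ i, logisticLoss ∘ (y i • dotForm (A i)) := by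
  ext x
  simp [logLoss, logisticLoss, dotForm_apply]

lemma convexOn_logLoss : ConvexOn ℝ Set.univ (logLoss m n A y) := by
  rw [logLoss_eq]
  refine (convexOn_sum convex_univ univ fun i _ => ?_).smul (by positivity)
  exact convexOn_logisticLoss.comp_linearMap (y i • dotForm (A i)).toLinearMap

lemma hasFDerivAt_logLoss (x : Fin n → ℝ) :
    HasFDerivAt (logLoss m n A y) (-∑ i, logisticDual m n A y x i • dotForm (A i)) x := by
  rw [logLoss_eq]
  have hsum := (HasFDerivAt.sum (u := univ) fun i _ =>
    (hasDerivAt_logisticLoss _).comp_hasFDerivAt x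
      (y i • dotForm (A i)).hasFDerivAt).const_smul (1 / (m : ℝ))
  refine hsum.congr_fderiv ?_
  rw [smul_sum, ← sum_neg_distrib]
  refine sum_congr rfl fun i _ => ?_
  ext v
  simp only [logisticDual, Real.sigmoid_def, neg_neg, smul_apply, neg_apply, dotForm_apply,
    smul_eq_mul]
  field_simp

end LogisticLoss

section ScreeningScore

variable {ι : Type*}

/-- The score `δ j = (∂ⱼ L)² / 4` by which coordinates are ranked, where `L'` is the derivative of
the loss at a relaxed optimum. -/
noncomputable def screeningScore [DecidableEq ι] (L' : (ι → ℝ) →L[ℝ] ℝ) (j : ι) : ℝ :=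
  (1 / 4) * (L' (Pi.single j 1)) ^ 2

lemma screeningScore_nonneg [DecidableEq ι] (L' : (ι → ℝ) →L[ℝ] ℝ) (j : ι) :
    0 ≤ screeningScore L' j := by
  unfold screeningScore
  positivity

lemma screeningScore_neg_sum_smul_dotForm {κ : Type*} [Fintype κ] [Fintype ι] [DecidableEq ι]
    (α : κ → ℝ) (A : κ → ι → ℝ) (j : ι) :
    screeningScore (-∑ i, α i • dotForm (A i)) j = (1 / 4) * (∑ i, α i * A i j) ^ 2 := by
  simp [screeningScore, dotForm_apply, Pi.single_apply]

end ScreeningScore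

section ConicRelaxation

variable {ι : Type*} [Fintype ι]

/-- The feasible points of the conic relaxation with cardinality budget `k`. -/
structure IsConicFeasible (k : ℝ) (x t z : ι → ℝ) : Prop where
  t_nonneg : ∀ j, 0 ≤ t j
  z_mem : ∀ j, 0 ≤ z j ∧ z j ≤ 1
  sum_le : ∑ j, z j ≤ k
  sq_le : ∀ j, x j ^ 2 ≤ z j * t j

/-- The feasible points of the cardinality-constrained problem with budget `k`: the 0-1 vector `z`
selects the coordinates in which `x` may be nonzero. -/
structure IsSparseFeasible (k : ℝ) (x z : ι → ℝ) : Prop where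
  z_eq : ∀ j, z j = 0 ∨ z j = 1
  sum_le : ∑ j, z j ≤ k
  eq_zero : ∀ j, z j = 0 → x j = 0

/-- The objective of the conic relaxation for a loss `L`. Taking `t j = x j ^ 2` gives the objective
of the cardinality-constrained problem, and taking `L` linear gives the linearised relaxation. -/
noncomputable def conicObjective (L : (ι → ℝ) → ℝ) (γ : ℝ) (x t : ι → ℝ) : ℝ :=
  L x + (1 / γ) * ∑ j, t j

/-- The optimal solutions of the conic relaxation. -/
structure IsConicSolution (L : (ι → ℝ) → ℝ) (γ k : ℝ) (x t z : ι → ℝ) : Prop where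
  feasible : IsConicFeasible k x t z
  le : ∀ x' t' z', IsConicFeasible k x' t' z' → conicObjective L γ x t ≤ conicObjective L γ x' t'

variable {L : (ι → ℝ) → ℝ} {L' : (ι → ℝ) →L[ℝ] ℝ} {γ k : ℝ} {x t z xs ts zs : ι → ℝ}

lemma IsSparseFeasible.isConicFeasible (h : IsSparseFeasible k x z) :
    IsConicFeasible k x (fun j => x j ^ 2) z where
  t_nonneg j := sq_nonneg (x j)
  z_mem j := by rcases h.z_eq j with hj | hj <;> simp [hj]
  sum_le := h.sum_le
  sq_le j := by rcases h.z_eq j with hj | hj <;> simp [hj, h.eq_zero]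

lemma convex_isConicFeasible (k : ℝ) :
    Convex ℝ {p : (ι → ℝ) × (ι → ℝ) × (ι → ℝ) | IsConicFeasible k p.1 p.2.1 p.2.2} := by
  rintro ⟨x, t, z⟩ hp ⟨x', t', z'⟩ hq a b ha hb hab
  have hcone j := convex_rotatedCone
    (show (x j, t j, z j) ∈ _ from ⟨hp.t_nonneg j, (hp.z_mem j).1, hp.sq_le j⟩)
    (show (x' j, t' j, z' j) ∈ _ from ⟨hq.t_nonneg j, (hq.z_mem j).1, hq.sq_le j⟩) ha hb hab
  refine ⟨fun j => (hcone j).1, fun j => ⟨(hcone j).2.1, ?_⟩, ?_, fun j => (hcone j).2.2⟩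
  · exact convex_Iic (1 : ℝ) (hp.z_mem j).2 (hq.z_mem j).2 ha hb hab
  · simpa [sum_add_distrib, mul_sum] using convex_Iic k hp.sum_le hq.sum_le ha hb hab

lemma hasFDerivAt_conicObjective (hL' : HasFDerivAt L L' x) :
    HasFDerivAt (fun p : (ι → ℝ) × (ι → ℝ) × (ι → ℝ) => conicObjective L γ p.1 p.2.1)
      (L'.comp (.fst ℝ _ _) + (1 / γ) • ∑ j, (.proj j ∘L .fst ℝ _ _ ∘L .snd ℝ _ _)) (x, t, z) := by
  refine (hL'.comp (x, t, z) hasFDerivAt_fst).add (.const_mul ?_ (1 / γ))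
  exact .fun_sum fun j _ => hasFDerivAt_pi'.1 hasFDerivAt_snd.fst j

lemma IsConicSolution.linearize (h : IsConicSolution L γ k xs ts zs)
    (hL' : HasFDerivAt L L' xs) : IsConicSolution L' γ k xs ts zs where
  feasible := h.feasible
  le x t z hx := by
    have hmin : IsMinOn (fun p : (ι → ℝ) × (ι → ℝ) × (ι → ℝ) => conicObjective L γ p.1 p.2.1)
        {p | IsConicFeasible k p.1 p.2.1 p.2.2} (xs, ts, zs) := fun p hp => h.le _ _ _ hp
    have hfirst := fderiv_sub_nonneg_of_isMinOn (convex_isConicFeasible k) hmin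
      (hasFDerivAt_conicObjective hL') h.feasible (show (x, t, z) ∈ _ from hx)
    simp only [Prod.mk_sub_mk, add_apply, ContinuousLinearMap.comp_apply,
      ContinuousLinearMap.coe_fst', ContinuousLinearMap.coe_snd', smul_apply,
      _root_.sum_apply, ContinuousLinearMap.proj_apply, map_sub,
      sum_sub_distrib, smul_eq_mul, mul_sub] at hfirst
    simp only [conicObjective]
    linarith

variable [DecidableEq ι]

lemma conicObjective_continuousLinearMap (L' : (ι → ℝ) →L[ℝ] ℝ) (γ : ℝ) (x t : ι → ℝ) :
    conicObjective L' γ x t = ∑ j, (x j * L' (Pi.single j 1) + (1 / γ) * t j) := by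
  have hsum : L' x = ∑ j, x j * L' (Pi.single j 1) := by
    conv_lhs => rw [← univ_sum_single x, map_sum]
    refine sum_congr rfl fun j _ => ?_
    rw [← smul_eq_mul, ← map_smul, ← Pi.single_smul, smul_eq_mul, mul_one]
  rw [conicObjective, hsum, sum_add_distrib, mul_sum]

lemma IsConicFeasible.neg_sum_le_conicObjective (h : IsConicFeasible k x t z) (hγ : 0 < γ)
    (L' : (ι → ℝ) →L[ℝ] ℝ) :
    -(γ * ∑ j, z j * screeningScore L' j) ≤ conicObjective L' γ x t := by
  rw [conicObjective_continuousLinearMap, mul_sum, ← sum_neg_distrib]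
  refine sum_le_sum fun j _ => ?_
  set g := L' (Pi.single j 1)
  -- `(-γ g / 2, γ² g² / 4, 1)` lies in the rotated cone, and pairing it with `(x j, t j, z j)` is
  -- AM-GM for `t j / γ` and `γ g² z j / 4`.
  have hpair := two_mul_mul_le_of_sq_le_mul (x₂ := -(γ * g / 2)) (t₂ := γ ^ 2 * g ^ 2 / 4) (z₂ := 1)
    (h.t_nonneg j) (h.z_mem j).1 (by positivity) zero_le_one (h.sq_le j) (by linarith)
  have hscaled := mul_le_mul_of_nonneg_left hpair (one_div_pos.2 hγ).le
  field_simp at hscaled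
  simp only [screeningScore]
  field_simp
  linarith

lemma exists_conicObjective_eq_neg_sum {w : ι → ℝ} (hγ : γ ≠ 0) (hw : ∀ j, 0 ≤ w j ∧ w j ≤ 1)
    (hsum : ∑ j, w j ≤ k) (L' : (ι → ℝ) →L[ℝ] ℝ) :
    ∃ x t, IsConicFeasible k x t w ∧
      conicObjective L' γ x t = -(γ * ∑ j, w j * screeningScore L' j) := by
  refine ⟨fun j => -(γ / 2) * L' (Pi.single j 1) * w j, fun j => γ ^ 2 * screeningScore L' j * w j,
    ⟨fun j => ?_, hw, hsum, fun j => ?_⟩, ?_⟩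
  · exact mul_nonneg (mul_nonneg (sq_nonneg γ) (screeningScore_nonneg L' j)) (hw j).1
  · simp only [screeningScore]
    exact le_of_eq (by ring)
  · rw [conicObjective_continuousLinearMap, mul_sum, ← sum_neg_distrib]
    refine sum_congr rfl fun j _ => ?_
    simp only [screeningScore]
    field_simp
    ring

namespace IsConicSolution

lemma add_mul_sum_sub_sum_le (h : IsConicSolution L γ k xs ts zs) (hγ : 0 < γ)
    (hL : ConvexOn ℝ Set.univ L) (hL' : HasFDerivAt L L' xs) {w : ι → ℝ}
    (hw : ∀ j, 0 ≤ w j ∧ w j ≤ 1) (hsum : ∑ j, w j ≤ k) (hx : IsConicFeasible k x t z) :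
    conicObjective L γ xs ts +
        γ * (∑ j, w j * screeningScore L' j - ∑ j, z j * screeningScore L' j) ≤
      conicObjective L γ x t := by
  obtain ⟨x', t', hfeas, hvalue⟩ := exists_conicObjective_eq_neg_sum hγ.ne' hw hsum L'
  have hopt := (h.linearize hL').le x' t' w hfeas
  have hlower := hx.neg_sum_le_conicObjective hγ L'
  have htangent := add_fderiv_sub_le_of_convexOn hL hL' x
  rw [hvalue] at hopt
  rw [map_sub] at htangent
  simp only [conicObjective] at *
  linarith

lemma add_mul_sum_mem_sub_sum_le {S : Finset ι} (h : IsConicSolution L γ #S xs ts zs) (hγ : 0 < γ)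
    (hL : ConvexOn ℝ Set.univ L) (hL' : HasFDerivAt L L' xs) (hx : IsConicFeasible #S x t z) :
    conicObjective L γ xs ts +
        γ * (∑ j ∈ S, screeningScore L' j - ∑ j, z j * screeningScore L' j) ≤
      conicObjective L γ x t := by
  simpa using h.add_mul_sum_sub_sum_le hγ hL hL' (w := fun j => if j ∈ S then 1 else 0)
    (fun j => by split_ifs <;> simp) (by simp) hx

end IsConicSolution

theorem safe_screening_CARD_general {S : Finset ι} {c : ℝ}
    (h : IsConicSolution L γ #S xs ts zs) (hγ : 0 < γ)
    (hL : ConvexOn ℝ Set.univ L) (hL' : HasFDerivAt L L' xs)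
    (hc : 0 ≤ c) (hS : IsThreshold (screeningScore L') S c)
    (hx : IsSparseFeasible #S x z) (j : ι) :
    (conicObjective L γ x (fun i => x i ^ 2) <
        conicObjective L γ xs ts - γ * (screeningScore L' j - c) → z j = 0) ∧
      (conicObjective L γ x (fun i => x i ^ 2) <
        conicObjective L γ xs ts + γ * (screeningScore L' j - c) → z j = 1) := by
  have hfeas := hx.isConicFeasible
  have hbound := h.add_mul_sum_mem_sub_sum_le hγ hL hL' hfeas
  refine ⟨fun hlt => (hx.z_eq j).resolve_right fun hj => ?_,
    fun hlt => (hx.z_eq j).resolve_left fun hj => ?_⟩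
  · have hloss := hS.sum_mul_le_sum_add_mul hc hfeas.z_mem hfeas.sum_le j
    rw [hj] at hloss
    linarith [mul_le_mul_of_nonneg_left hloss hγ.le]
  · have hloss := hS.sum_mul_le_sum_sub_mul hc hfeas.z_mem hfeas.sum_le j
    rw [hj] at hloss
    linarith [mul_le_mul_of_nonneg_left hloss hγ.le]

end ConicRelaxation

/-- Safe screening rule for cardinality-constrained logistic regression (Proposition 2).
`(xs, ts, zs)` is an optimal solution of the conic relaxation attaining `ηCC`;
`α` and `δ` are defined from `xs`; the permutation `σ` sorts `δ` in nonincreasing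
order, so `δ (σ ⟨k-1,_⟩)` is the k-th largest entry `δ_[k]` and `δ (σ ⟨k,_⟩)` is
`δ_[k+1]`; `ηC` is the optimal value (infimum) of the cardinality-constrained
mixed-integer problem and `ηbar` is an upper bound on `ηC`.  Then every optimal
solution `(xh, zh)` of the mixed-integer problem attaining `ηC` satisfies
`zh j = 0` whenever `δ_j ≤ δ_[k+1]` and `ηCC - γ (δ_j - δ_[k]) > ηbar`, and
`zh j = 1` whenever `δ_j ≥ δ_[k]` and `ηCC + γ (δ_j - δ_[k+1]) > ηbar`. -/
theorem safe_screening_CARD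
    (m n : ℕ) (hm : 0 < m) (hn : 0 < n)
    (A : Fin m → Fin n → ℝ) (y : Fin m → ℝ) (hy : ∀ i, y i = 1 ∨ y i = -1)
    (γ : ℝ) (hγ : 0 < γ)
    (k : ℕ) (hk : 1 ≤ k) (hkn : k < n)
    -- (xs, ts, zs) is an optimal solution of the conic relaxation
    (xs ts zs : Fin n → ℝ)
    (hts : ∀ j, 0 ≤ ts j) (hzs : ∀ j, 0 ≤ zs j ∧ zs j ≤ 1)
    (hcard_s : ∑ j, zs j ≤ (k : ℝ))
    (hcone_s : ∀ j, (xs j) ^ 2 ≤ zs j * ts j)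
    (hopt : ∀ x t z : Fin n → ℝ, (∀ j, 0 ≤ t j) → (∀ j, 0 ≤ z j ∧ z j ≤ 1) →
      (∑ j, z j ≤ (k : ℝ)) → (∀ j, (x j) ^ 2 ≤ z j * t j) →
      logLoss m n A y xs + (1 / γ) * ∑ j, ts j ≤
        logLoss m n A y x + (1 / γ) * ∑ j, t j)
    (ηCC : ℝ)
    (hηCC : ηCC = logLoss m n A y xs + (1 / γ) * ∑ j, ts j)
    -- dual quantities defined from xs
    (α : Fin m → ℝ)
    (hα : ∀ i, α i = y i / ((m : ℝ) * (1 + Real.exp (y i * ∑ j, A i j * xs j))))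
    (δ : Fin n → ℝ)
    (hδ : ∀ j, δ j = (1 / 4) * (∑ i, α i * A i j) ^ 2)
    -- σ sorts δ in nonincreasing order
    (σ : Equiv.Perm (Fin n)) (hσ : ∀ i j : Fin n, i ≤ j → δ (σ j) ≤ δ (σ i))
    -- ηC is the optimal value (infimum) of the mixed-integer problem
    (ηC : ℝ)
    (hηC : ηC = sInf {v : ℝ | ∃ x z : Fin n → ℝ, (∀ j, z j = 0 ∨ z j = 1) ∧
      (∑ j, z j ≤ (k : ℝ)) ∧ (∀ j, z j = 0 → x j = 0) ∧
      v = logLoss m n A y x + (1 / γ) * ∑ j, (x j) ^ 2})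
    (ηbar : ℝ) (hub : ηC ≤ ηbar)
    -- (xh, zh) is an optimal solution of the mixed-integer problem attaining ηC
    (xh zh : Fin n → ℝ)
    (hzh : ∀ j, zh j = 0 ∨ zh j = 1)
    (hcard : ∑ j, zh j ≤ (k : ℝ))
    (hxz : ∀ j, zh j = 0 → xh j = 0)
    (hatt : logLoss m n A y xh + (1 / γ) * ∑ j, (xh j) ^ 2 = ηC) :
    ∀ j, (δ j ≤ δ (σ ⟨k, hkn⟩) →
            ηCC - γ * (δ j - δ (σ ⟨k - 1, by omega⟩)) > ηbar → zh j = 0) ∧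
         (δ (σ ⟨k - 1, by omega⟩) ≤ δ j →
            ηCC + γ * (δ j - δ (σ ⟨k, hkn⟩)) > ηbar → zh j = 1) := by
  obtain rfl : α = logisticDual m n A y xs := funext hα
  obtain rfl : δ = screeningScore (-∑ i, logisticDual m n A y xs i • dotForm (A i)) :=
    funext fun j => (hδ j).trans (screeningScore_neg_sum_smul_dotForm _ A j).symm
  obtain ⟨S, rfl, hS⟩ := exists_card_eq_and_isThreshold hkn.le (δ := screeningScore _) hσ
  have hsol : IsConicSolution (logLoss m n A y) γ #S xs ts zs :=
    ⟨⟨hts, hzs, hcard_s, hcone_s⟩, fun x t z h => hopt x t z h.t_nonneg h.z_mem h.sum_le h.sq_le⟩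
  have hscreen (i : Fin n) (hki : #S ≤ i + 1) (hik : (i : ℕ) ≤ #S) :=
    safe_screening_CARD_general hsol hγ (convexOn_logLoss m n A y) (hasFDerivAt_logLoss m n A y xs)
      (screeningScore_nonneg _ _) (hS i hki hik) ⟨hzh, hcard, hxz⟩
  have hobj := hatt.trans_le hub
  subst hηCC
  exact fun j =>
    ⟨fun _ h => (hscreen ⟨#S - 1, _⟩ (by grind) (by grind) j).1 (hobj.trans_lt h),
      fun _ h => (hscreen ⟨#S, hkn⟩ (by grind) le_rfl j).2 (hobj.trans_lt h)⟩
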